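/- arXiv:1509.02141 — 4 statements merged into one kernel-verified Lean document; each statement's English description precedes it below -/
import Mathlib

section
/- Let ν be a positive Borel measure on ℝ that is 2π-periodic (ν(A + 2π) = ν(A) for every Borel set A) and finite on compact sets, let p ≥ 1 and δ ∈ (0,π). Then ∫_{[−π,π)} ν((θ−δ, θ+δ))^{p−1} dν(θ) ≤ (2^{p+1}/δ) · ∫_{[−π,π)} ν((θ−δ, θ+δ))^p dθ. -/
open MeasureTheory

/-
The window around any `t` in one half of `(θ - δ, θ + δ)` covers that half. Since
`(a + b) ^ q ≤ 2 ^ q * (a ^ q + b ^ q)`, it follows that `δ * ν (θ - δ, θ + δ) ^ (p - 1)` is at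
most `2 ^ (p - 1)` times the integral of `ν (t - δ, t + δ) ^ (p - 1)` over `|t - θ| < δ`. Integrate
this against `ν` over one period and exchange the integrals: by the mass transport principle, the
outer integral then again runs over exactly one period in `t`, and the inner integral over `θ`
supplies the missing factor `ν (t - δ, t + δ)`.
-/

open Metric Set
open scoped ENNReal

section MassTransport

variable {G α β : Type*} [AddGroup G] [Countable G]
  [AddAction G α] [MeasurableSpace α] [MeasurableConstVAdd G α]
  [AddAction G β] [MeasurableSpace β] [MeasurableConstVAdd G β]
  {μ : Measure α} [SFinite μ] [VAddInvariantMeasure G α μ]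
  {ν : Measure β} [SFinite ν] [VAddInvariantMeasure G β ν] {s : Set α} {t : Set β}

theorem lintegral_lintegral_swap_of_isAddFundamentalDomain
    (hs : IsAddFundamentalDomain G s μ) (ht : IsAddFundamentalDomain G t ν)
    {F : α → β → ℝ≥0∞} (hF : Measurable (Function.uncurry F))
    (hinv : ∀ (g : G) x y, F (g +ᵥ x) (g +ᵥ y) = F x y) :
    ∫⁻ x in s, ∫⁻ y, F x y ∂ν ∂μ = ∫⁻ y in t, ∫⁻ x, F x y ∂μ ∂ν := by
  have hF₁ (g : G) : Measurable (Function.uncurry fun x y ↦ F (g +ᵥ x) y) :=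
    hF.comp ((measurable_fst.const_vadd g).prodMk measurable_snd)
  have unfold_right (x : α) : ∫⁻ y, F x y ∂ν = ∑' g : G, ∫⁻ y in t, F (g +ᵥ x) y ∂ν := by
    rw [ht.lintegral_eq_tsum']
    refine tsum_congr fun g ↦ lintegral_congr fun y ↦ ?_
    rw [← hinv g x, vadd_neg_vadd]
  calc ∫⁻ x in s, ∫⁻ y, F x y ∂ν ∂μ
      = ∑' g : G, ∫⁻ x in s, ∫⁻ y in t, F (g +ᵥ x) y ∂ν ∂μ := by
        simp only [unfold_right]
        exact lintegral_tsum fun g ↦ (hF₁ g).lintegral_prod_right.aemeasurable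
    _ = ∑' g : G, ∫⁻ y in t, ∫⁻ x in s, F (g +ᵥ x) y ∂μ ∂ν :=
        tsum_congr fun g ↦ lintegral_lintegral_swap (hF₁ g).aemeasurable
    _ = ∫⁻ y in t, ∫⁻ x, F x y ∂μ ∂ν := by
        simp only [hs.lintegral_eq_tsum'']
        exact (lintegral_tsum fun g ↦ (hF₁ g).lintegral_prod_left.aemeasurable).symm

end MassTransport

section Ball

variable {α : Type*} [PseudoMetricSpace α] [MeasurableSpace α]

theorem measurableSet_setOf_snd_mem_ball_fst [OpensMeasurableSpace α]
    [SecondCountableTopology α] (r : ℝ) :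
    MeasurableSet {z : α × α | z.2 ∈ ball z.1 r} :=
  measurableSet_lt (measurable_snd.dist measurable_fst) measurable_const

theorem measurable_measure_ball [OpensMeasurableSpace α] [SecondCountableTopology α]
    (ν : Measure α) [SFinite ν] (r : ℝ) : Measurable fun x ↦ ν (ball x r) :=
  measurable_measure_prodMk_left (measurableSet_setOf_snd_mem_ball_fst r)

theorem setLIntegral_measure_ball_rpow_ne_top [ProperSpace α] (μ ν : Measure α)
    [IsFiniteMeasureOnCompacts μ] [IsFiniteMeasureOnCompacts ν] {s : Set α}
    (hs : Bornology.IsBounded s) {p : ℝ} (hp : 0 ≤ p) (r : ℝ) :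
    ∫⁻ x in s, ν (ball x r) ^ p ∂μ ≠ ∞ := by
  have hbound : ν (thickening r s) ^ p < ∞ :=
    ENNReal.rpow_lt_top_of_nonneg hp hs.thickening.measure_lt_top.ne
  refine (setLIntegral_lt_top_of_le_nnreal hs.measure_lt_top.ne
    ⟨(ν (thickening r s) ^ p).toNNReal, fun x hx ↦ ?_⟩).ne
  rw [ENNReal.coe_toNNReal hbound.ne]
  gcongr
  exact ball_subset_thickening hx r

theorem setLIntegral_lintegral_ball_swap [OpensMeasurableSpace α] [SecondCountableTopology α]
    {G : Type*} [AddGroup G] [Countable G] [AddAction G α] [IsIsometricVAdd G α]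
    [MeasurableConstVAdd G α] {μ ν : Measure α} [SFinite μ] [SFinite ν] [VAddInvariantMeasure G α μ]
    [VAddInvariantMeasure G α ν] {s t : Set α} (hs : IsAddFundamentalDomain G s μ)
    (ht : IsAddFundamentalDomain G t ν) {f : α → ℝ≥0∞} (hf : Measurable f)
    (hinv : ∀ (g : G) x, f (g +ᵥ x) = f x) (r : ℝ) :
    ∫⁻ x in s, ∫⁻ y in ball x r, f y ∂ν ∂μ = ∫⁻ y in t, f y * μ (ball y r) ∂ν := by
  have hmeas : Measurable (Function.uncurry fun x y ↦ (ball x r).indicator f y) :=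
    (hf.comp measurable_snd).indicator (measurableSet_setOf_snd_mem_ball_fst r)
  have hdiag (g : G) (x y : α) :
      (ball (g +ᵥ x) r).indicator f (g +ᵥ y) = (ball x r).indicator f y := by
    simp only [indicator, mem_ball, dist_vadd, hinv]
  have hsymm (x y : α) : (ball x r).indicator f y = (ball y r).indicator (fun _ ↦ f y) x := by
    simp only [indicator, mem_ball, dist_comm]
  calc ∫⁻ x in s, ∫⁻ y in ball x r, f y ∂ν ∂μ
      = ∫⁻ x in s, ∫⁻ y, (ball x r).indicator f y ∂ν ∂μ := by
        simp only [lintegral_indicator measurableSet_ball]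
    _ = ∫⁻ y in t, ∫⁻ x, (ball x r).indicator f y ∂μ ∂ν :=
        lintegral_lintegral_swap_of_isAddFundamentalDomain hs ht hmeas hdiag
    _ = ∫⁻ y in t, f y * μ (ball y r) ∂ν := by
        simp only [hsymm, lintegral_indicator_const measurableSet_ball]

end Ball

theorem vaddInvariantMeasure_zmultiples {H : Type*} [AddCommGroup H] [MeasurableSpace H]
    [MeasurableAdd H] {ν : Measure H} {T : H} (hν : MeasurePreserving (· + T) ν ν) :
    VAddInvariantMeasure (AddSubgroup.zmultiples T) H ν := by
  have hneg : MeasurePreserving (· + -T) ν ν :=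
    MeasurePreserving.symm (MeasurableEquiv.addRight T) hν
  have hzsmul (n : ℤ) : MeasurePreserving (· + n • T) ν ν := by
    induction n with
    | zero => simpa using! MeasurePreserving.id ν
    | succ n ih => simpa [Function.comp_def, add_smul, add_assoc] using hν.comp ih
    | pred n ih => simpa [Function.comp_def, sub_smul, sub_eq_add_neg, add_smul, add_assoc]
        using hneg.comp ih
  refine ⟨?_⟩
  rintro ⟨_, n, rfl⟩ s hs
  simpa [add_comm, AddSubgroup.vadd_def] using (hzsmul n).measure_preimage hs.nullMeasurableSet

theorem isAddFundamentalDomain_Ico {T : ℝ} (hT : 0 < T) (a : ℝ) (μ : Measure ℝ) :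
    IsAddFundamentalDomain (AddSubgroup.zmultiples T) (Ico a (a + T)) μ := by
  refine IsAddFundamentalDomain.mk' nullMeasurableSet_Ico fun x ↦ ?_
  have hbij : Function.Bijective
      (codRestrict (fun n : ℤ ↦ n • T) (AddSubgroup.zmultiples T) fun n ↦ ⟨n, rfl⟩) :=
    (Equiv.ofInjective (fun n : ℤ ↦ n • T) (zsmul_left_strictMono hT).injective).bijective
  refine hbij.existsUnique_iff.2 ?_
  simpa only [add_comm x] using! existsUnique_add_zsmul_mem_Ico hT x a

theorem add_rpow_le_two_rpow_mul_rpow_add_rpow (a b : ℝ≥0∞) {q : ℝ} (hq : 0 ≤ q) :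
    (a + b) ^ q ≤ 2 ^ q * (a ^ q + b ^ q) :=
  calc (a + b) ^ q
      ≤ (2 * max a b) ^ q := by
        rw [two_mul]
        gcongr
        exacts [le_max_left a b, le_max_right a b]
    _ = 2 ^ q * max (a ^ q) (b ^ q) := by
        rw [ENNReal.mul_rpow_of_nonneg _ _ hq, ENNReal.max_rpow hq]
    _ ≤ 2 ^ q * (a ^ q + b ^ q) := by
        gcongr
        exact max_le le_self_add le_add_self

theorem measure_mul_measure_rpow_le_setLIntegral_ball {α : Type*} [PseudoMetricSpace α]
    [MeasurableSpace α] (μ ν : Measure α) {s t : Set α} (ht : MeasurableSet t) {r : ℝ}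
    (hst : ∀ y ∈ t, s ⊆ ball y r) {q : ℝ} (hq : 0 ≤ q) :
    μ t * ν s ^ q ≤ ∫⁻ y in t, ν (ball y r) ^ q ∂μ := by
  rw [mul_comm, ← setLIntegral_const]
  refine setLIntegral_mono' ht fun y hy ↦ ?_
  gcongr
  exact hst y hy

theorem Ioc_sub_subset_ball {t θ δ : ℝ} (ht : t ∈ Ioo (θ - δ) θ) :
    Ioc (θ - δ) θ ⊆ ball t δ := by
  rw [Real.ball_eq_Ioo]
  exact fun x hx ↦ ⟨by linarith [hx.1, ht.2], by linarith [hx.2, ht.1]⟩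

theorem Ico_add_subset_ball {t θ δ : ℝ} (ht : t ∈ Ioo θ (θ + δ)) :
    Ico θ (θ + δ) ⊆ ball t δ := by
  rw [Real.ball_eq_Ioo]
  exact fun x hx ↦ ⟨by linarith [hx.1, ht.2], by linarith [hx.2, ht.1]⟩

theorem ofReal_mul_measure_ball_rpow_le (ν : Measure ℝ) {q : ℝ} (hq : 0 ≤ q) (θ δ : ℝ) :
    ENNReal.ofReal δ * ν (ball θ δ) ^ q ≤ 2 ^ q * ∫⁻ t in ball θ δ, ν (ball t δ) ^ q := by
  have hcover : ball θ δ ⊆ Ioc (θ - δ) θ ∪ Ico θ (θ + δ) := by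
    rw [Real.ball_eq_Ioo]
    exact fun x hx ↦ (le_total x θ).imp (fun h ↦ ⟨hx.1, h⟩) (fun h ↦ ⟨h, hx.2⟩)
  have hdisj : Disjoint (Ioo (θ - δ) θ) (Ioo θ (θ + δ)) :=
    disjoint_left.2 fun x hx hx' ↦ hx.2.not_gt hx'.1
  have hhalves : Ioo (θ - δ) θ ∪ Ioo θ (θ + δ) ⊆ ball θ δ := by
    rw [Real.ball_eq_Ioo]
    rintro x (hx | hx)
    exacts [⟨hx.1, by linarith [hx.1, hx.2]⟩, ⟨by linarith [hx.1, hx.2], hx.2⟩]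
  calc ENNReal.ofReal δ * ν (ball θ δ) ^ q
      ≤ ENNReal.ofReal δ * (ν (Ioc (θ - δ) θ) + ν (Ico θ (θ + δ))) ^ q := by
        gcongr
        exact (measure_mono hcover).trans (measure_union_le _ _)
    _ ≤ ENNReal.ofReal δ * (2 ^ q * (ν (Ioc (θ - δ) θ) ^ q + ν (Ico θ (θ + δ)) ^ q)) := by
        gcongr
        exact add_rpow_le_two_rpow_mul_rpow_add_rpow _ _ hq
    _ = 2 ^ q * (volume (Ioo (θ - δ) θ) * ν (Ioc (θ - δ) θ) ^ q +
          volume (Ioo θ (θ + δ)) * ν (Ico θ (θ + δ)) ^ q) := by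
        rw [Real.volume_Ioo, Real.volume_Ioo, sub_sub_cancel, add_sub_cancel_left]
        ring
    _ ≤ 2 ^ q * ((∫⁻ t in Ioo (θ - δ) θ, ν (ball t δ) ^ q) +
          ∫⁻ t in Ioo θ (θ + δ), ν (ball t δ) ^ q) := by
        gcongr
        · exact measure_mul_measure_rpow_le_setLIntegral_ball _ ν measurableSet_Ioo
            (fun _ ↦ Ioc_sub_subset_ball) hq
        · exact measure_mul_measure_rpow_le_setLIntegral_ball _ ν measurableSet_Ioo
            (fun _ ↦ Ico_add_subset_ball) hq
    _ ≤ 2 ^ q * ∫⁻ t in ball θ δ, ν (ball t δ) ^ q := by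
        rw [← lintegral_union measurableSet_Ioo hdisj]
        gcongr

theorem ofReal_mul_setLIntegral_measure_ball_rpow_le {G : Type*} [AddGroup G] [Countable G]
    [AddAction G ℝ] [IsIsometricVAdd G ℝ]
    [VAddInvariantMeasure G ℝ volume] (ν : Measure ℝ) [SFinite ν] [VAddInvariantMeasure G ℝ ν]
    {s t : Set ℝ} (hs : IsAddFundamentalDomain G s ν) (ht : IsAddFundamentalDomain G t)
    {q : ℝ} (hq : 0 ≤ q) (δ : ℝ) :
    ENNReal.ofReal δ * ∫⁻ θ in s, ν (ball θ δ) ^ q ∂ν ≤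
      2 ^ q * ∫⁻ θ in t, ν (ball θ δ) ^ (q + 1) := by
  have hmeas : Measurable fun θ ↦ ν (ball θ δ) ^ q := (measurable_measure_ball ν δ).pow_const q
  have hinv (g : G) (θ : ℝ) : ν (ball (g +ᵥ θ) δ) ^ q = ν (ball θ δ) ^ q := by
    rw [← vadd_ball, measure_vadd]
  calc ENNReal.ofReal δ * ∫⁻ θ in s, ν (ball θ δ) ^ q ∂ν
      = ∫⁻ θ in s, ENNReal.ofReal δ * ν (ball θ δ) ^ q ∂ν :=
        (lintegral_const_mul _ hmeas).symm
    _ ≤ ∫⁻ θ in s, 2 ^ q * (∫⁻ τ in ball θ δ, ν (ball τ δ) ^ q) ∂ν :=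
        lintegral_mono fun θ ↦ ofReal_mul_measure_ball_rpow_le ν hq θ δ
    _ = 2 ^ q * ∫⁻ θ in s, (∫⁻ τ in ball θ δ, ν (ball τ δ) ^ q) ∂ν :=
        lintegral_const_mul' _ _ (ENNReal.rpow_ne_top_of_nonneg hq ENNReal.ofNat_ne_top)
    _ = 2 ^ q * ∫⁻ θ in t, ν (ball θ δ) ^ q * ν (ball θ δ) := by
        rw [setLIntegral_lintegral_ball_swap hs ht hmeas hinv]
    _ = 2 ^ q * ∫⁻ θ in t, ν (ball θ δ) ^ (q + 1) := by
        simp only [ENNReal.rpow_add_of_nonneg _ _ hq zero_le_one, ENNReal.rpow_one]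

theorem stmt6_general (ν : Measure ℝ) [IsFiniteMeasureOnCompacts ν] {T : ℝ} (hT : 0 < T)
    (hν : MeasurePreserving (· + T) ν ν) (a : ℝ) {p : ℝ} (hp : 1 ≤ p) {δ : ℝ} (hδ : 0 < δ) :
    ∫ θ in Ico a (a + T), (ν (Ioo (θ - δ) (θ + δ))).toReal ^ (p - 1) ∂ν ≤
      2 ^ (p - 1) / δ * ∫ θ in Ico a (a + T), (ν (Ioo (θ - δ) (θ + δ))).toReal ^ p := by
  have := vaddInvariantMeasure_zmultiples hν
  have : IsIsometricVAdd (AddSubgroup.zmultiples T) ℝ := ⟨fun g ↦ isometry_add_left (g : ℝ)⟩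
  have hq : 0 ≤ p - 1 := sub_nonneg.2 hp
  have integral_eq (μ : Measure ℝ) {r : ℝ} (hr : 0 ≤ r) :
      ∫ θ in Ico a (a + T), (ν (ball θ δ)).toReal ^ r ∂μ =
        (∫⁻ θ in Ico a (a + T), ν (ball θ δ) ^ r ∂μ).toReal := by
    simp only [ENNReal.toReal_rpow]
    exact integral_toReal ((measurable_measure_ball ν δ).pow_const r).aemeasurable
      (.of_forall fun θ ↦ ENNReal.rpow_lt_top_of_nonneg hr measure_ball_lt_top.ne)
  have hle := ofReal_mul_setLIntegral_measure_ball_rpow_le ν (isAddFundamentalDomain_Ico hT a ν)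
    (isAddFundamentalDomain_Ico hT a volume) hq δ
  have hfin := setLIntegral_measure_ball_rpow_ne_top volume ν (isBounded_Ico a (a + T))
    (zero_le_one.trans hp) δ
  rw [sub_add_cancel] at hle
  simp only [← Real.ball_eq_Ioo]
  rw [integral_eq ν hq, integral_eq volume (zero_le_one.trans hp),
    div_mul_eq_mul_div, le_div_iff₀' hδ]
  simpa [ENNReal.toReal_mul, hδ.le, ← ENNReal.toReal_rpow] using ENNReal.toReal_mono
    (ENNReal.mul_ne_top (ENNReal.rpow_ne_top_of_nonneg hq ENNReal.ofNat_ne_top) hfin) hle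

/-- If `ν` is a `2π`-periodic positive Borel measure on `ℝ`, finite on
compact sets, `p ≥ 1` and `δ ∈ (0,π)`, then
`∫_{[-π,π)} ν((θ-δ,θ+δ))^{p-1} dν(θ) ≤ (2^{p+1}/δ)·∫_{[-π,π)} ν((θ-δ,θ+δ))^p dθ`. -/
theorem stmt6 (ν : Measure ℝ) [IsFiniteMeasureOnCompacts ν]
    (hper : ∀ A : Set ℝ, MeasurableSet A → ν ((fun x => x + 2 * Real.pi) ⁻¹' A) = ν A)
    (p : ℝ) (hp : 1 ≤ p) (δ : ℝ) (hδ0 : 0 < δ) (hδπ : δ < Real.pi) :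
    ∫ θ in Set.Ico (-Real.pi) Real.pi,
        (ν (Set.Ioo (θ - δ) (θ + δ))).toReal ^ (p - 1) ∂ν ≤
      (2 ^ (p + 1) / δ) *
        ∫ θ in Set.Ico (-Real.pi) Real.pi, (ν (Set.Ioo (θ - δ) (θ + δ))).toReal ^ p := by
  have h := stmt6_general ν Real.two_pi_pos ⟨by fun_prop, Measure.ext fun A hA ↦
    (Measure.map_apply (by fun_prop) hA).trans (hper A hA)⟩ (-Real.pi) hp hδ0
  rw [two_mul, neg_add_cancel_left] at h
  exact h.trans (by gcongr <;> linarith)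
end

section
/- For all z, ζ in the open unit disc 𝔻 with z ≠ ζ one has 0 ≤ K(z,ζ) ≤ (1−|z|²)/|z−ζ|², where K(z,ζ) = (1/(1−|ζ|))·log|(1−z·conj(ζ))/(z−ζ)|. -/
open Complex

/-- The kernel `K(z,ζ) = (1/(1-|ζ|)) · log |(1 - z·conj ζ)/(z - ζ)|`. -/
noncomputable def Kker (z ζ : ℂ) : ℝ :=
  (1 / (1 - ‖ζ‖)) * Real.log (‖(1 - z * (starRingEnd ℂ) ζ) / (z - ζ)‖)

/-!
The Green function `G(z,ζ)` of the disc is `log t` with `t = |1 - z·conj ζ| / |z - ζ|`. The identity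
`|1 - z·conj ζ|² = |z - ζ|² + (1 - |z|²)(1 - |ζ|²)` shows that `t ≥ 1`, whence `G ≥ 0`, and that
`t² - 1 = (1 - |z|²)(1 - |ζ|²) / |z - ζ|²`. Since `2 log t = log t² ≤ t² - 1`, dividing by
`1 - |ζ|` leaves the factor `(1 + |ζ|) / 2 ≤ 1` in front of `(1 - |z|²) / |z - ζ|²`.
-/

open scoped ComplexConjugate

theorem norm_one_sub_mul_conj_sq {𝕜 : Type*} [RCLike 𝕜] (z w : 𝕜) :
    ‖1 - z * conj w‖ ^ 2 = ‖z - w‖ ^ 2 + (1 - ‖z‖ ^ 2) * (1 - ‖w‖ ^ 2) := by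
  simp only [RCLike.norm_sq_eq_def, map_sub, RCLike.mul_re, RCLike.mul_im, RCLike.conj_re,
    RCLike.conj_im, RCLike.one_re, RCLike.one_im]
  ring

theorem norm_sub_le_norm_one_sub_mul_conj {𝕜 : Type*} [RCLike 𝕜] {z w : 𝕜}
    (hz : ‖z‖ ≤ 1) (hw : ‖w‖ ≤ 1) : ‖z - w‖ ≤ ‖1 - z * conj w‖ := by
  have hz' : 0 ≤ 1 - ‖z‖ ^ 2 := sub_nonneg.2 (pow_le_one₀ (norm_nonneg z) hz)
  have hw' : 0 ≤ 1 - ‖w‖ ^ 2 := sub_nonneg.2 (pow_le_one₀ (norm_nonneg w) hw)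
  refine le_of_sq_le_sq ?_ (norm_nonneg _)
  rw [norm_one_sub_mul_conj_sq]
  exact le_add_of_nonneg_right (mul_nonneg hz' hw')

theorem log_le_sq_sub_one_div_two {t : ℝ} (ht : t ≠ 0) : Real.log t ≤ (t ^ 2 - 1) / 2 := by
  have h : Real.log (t ^ 2) ≤ t ^ 2 - 1 := Real.log_le_sub_one_of_pos (by positivity)
  rw [Real.log_pow, Nat.cast_ofNat] at h
  linarith

/-- The Green function `G(z,ζ)` of the unit disc with pole at `ζ`, normalized so that
`G(z,ζ) + log |z - ζ|` is harmonic in `z`. On the diagonal the formula takes the junk value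
`log 0 = 0` instead of `∞`. -/
noncomputable def unitDiscGreen (z ζ : ℂ) : ℝ :=
  Real.log ‖(1 - z * conj ζ) / (z - ζ)‖

section

variable {z ζ : ℂ}

theorem unitDiscGreen_nonneg (hz : ‖z‖ ≤ 1) (hζ : ‖ζ‖ ≤ 1) (hne : z ≠ ζ) :
    0 ≤ unitDiscGreen z ζ := by
  have hd : 0 < ‖z - ζ‖ := norm_sub_pos_iff.2 hne
  refine Real.log_nonneg ?_
  rw [norm_div, one_le_div hd]
  exact norm_sub_le_norm_one_sub_mul_conj hz hζ

theorem unitDiscGreen_le (hz : ‖z‖ ≤ 1) (hζ : ‖ζ‖ ≤ 1) (hne : z ≠ ζ) :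
    unitDiscGreen z ζ ≤ (1 - ‖z‖ ^ 2) * (1 - ‖ζ‖ ^ 2) / ‖z - ζ‖ ^ 2 / 2 := by
  have hd : 0 < ‖z - ζ‖ := norm_sub_pos_iff.2 hne
  have hn : 0 < ‖1 - z * conj ζ‖ := hd.trans_le (norm_sub_le_norm_one_sub_mul_conj hz hζ)
  calc unitDiscGreen z ζ = Real.log (‖1 - z * conj ζ‖ / ‖z - ζ‖) := by
        rw [unitDiscGreen, norm_div]
    _ ≤ ((‖1 - z * conj ζ‖ / ‖z - ζ‖) ^ 2 - 1) / 2 :=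
        log_le_sq_sub_one_div_two (div_pos hn hd).ne'
    _ = (1 - ‖z‖ ^ 2) * (1 - ‖ζ‖ ^ 2) / ‖z - ζ‖ ^ 2 / 2 := by
        rw [div_pow, norm_one_sub_mul_conj_sq, add_div, div_self (pow_pos hd 2).ne',
          add_sub_cancel_left]

theorem Kker_eq_unitDiscGreen_div (z ζ : ℂ) : Kker z ζ = unitDiscGreen z ζ / (1 - ‖ζ‖) :=
  one_div_mul_eq_div _ _

theorem Kker_nonneg (hz : ‖z‖ ≤ 1) (hζ : ‖ζ‖ < 1) (hne : z ≠ ζ) : 0 ≤ Kker z ζ := by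
  rw [Kker_eq_unitDiscGreen_div]
  exact div_nonneg (unitDiscGreen_nonneg hz hζ.le hne) (sub_pos.2 hζ).le

theorem Kker_le_half_one_add_norm_mul (hz : ‖z‖ ≤ 1) (hζ : ‖ζ‖ < 1) (hne : z ≠ ζ) :
    Kker z ζ ≤ (1 + ‖ζ‖) / 2 * ((1 - ‖z‖ ^ 2) / ‖z - ζ‖ ^ 2) := by
  rw [Kker_eq_unitDiscGreen_div, div_le_iff₀ (sub_pos.2 hζ)]
  calc unitDiscGreen z ζ ≤ (1 - ‖z‖ ^ 2) * (1 - ‖ζ‖ ^ 2) / ‖z - ζ‖ ^ 2 / 2 :=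
        unitDiscGreen_le hz hζ.le hne
    _ = (1 + ‖ζ‖) / 2 * ((1 - ‖z‖ ^ 2) / ‖z - ζ‖ ^ 2) * (1 - ‖ζ‖) := by ring

end

/-- For `z, ζ` in the open unit disc with `z ≠ ζ`,
`0 ≤ K(z,ζ) ≤ (1-|z|²)/|z-ζ|²`. -/
theorem stmt8 (z ζ : ℂ) (hz : ‖z‖ < 1) (hζ : ‖ζ‖ < 1) (hne : z ≠ ζ) :
    0 ≤ Kker z ζ ∧ Kker z ζ ≤ (1 - ‖z‖ ^ 2) / ‖z - ζ‖ ^ 2 := by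
  have hz' : 0 ≤ 1 - ‖z‖ ^ 2 := sub_nonneg.2 (pow_le_one₀ (norm_nonneg z) hz.le)
  refine ⟨Kker_nonneg hz.le hζ hne, ?_⟩
  calc Kker z ζ ≤ (1 + ‖ζ‖) / 2 * ((1 - ‖z‖ ^ 2) / ‖z - ζ‖ ^ 2) :=
        Kker_le_half_one_add_norm_mul hz.le hζ hne
    _ ≤ (1 - ‖z‖ ^ 2) / ‖z - ζ‖ ^ 2 :=
        mul_le_of_le_one_left (by positivity) (by linarith)
end

section
/- Let D be a compact subset of the open unit disc 𝔻. Then, uniformly in z ∈ D and θ ∈ [0,2π], K(z, ρe^{iθ}) → (1−|z|²)/|e^{iθ}−z|² as ρ ↑ 1; that is, sup_{z∈D, θ∈[0,2π]} |K(z, ρe^{iθ}) − (1−|z|²)/|e^{iθ}−z|²| → 0 as ρ → 1⁻. -/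
open Complex

/-!
Since `|1 - z·conj ζ|² - |z - ζ|² = (1 - |z|²)(1 - |ζ|²)`, the inequalities
`1 - 1/x ≤ log x ≤ x - 1` at `x = |1 - z·conj ζ|² / |z - ζ|²` squeeze `K(z,ζ)` between
`(1 + |ζ|)/2 · (1 - |z|²)/|1 - z·conj ζ|²` and `(1 + |ζ|)/2 · (1 - |z|²)/|z - ζ|²`. Both bounds
are continuous up to `|ζ| = 1`, where they equal the Poisson kernel, so `K` converges to the
Poisson kernel jointly in `(z, ζ)`. On a compact set such joint convergence is uniform.
-/

open Filter Topology ComplexConjugate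

theorem tendstoUniformlyOn_of_isCompact_of_forall_tendsto {ι X Y : Type*}
    [TopologicalSpace X] [UniformSpace Y] {F : ι → X → Y} {f : X → Y} {p : Filter ι} {K : Set X}
    (hK : IsCompact K) (hf : ContinuousOn f K)
    (hF : ∀ x ∈ K, Tendsto (fun q : ι × X ↦ F q.1 q.2) (p ×ˢ 𝓝[K] x) (𝓝 (f x))) :
    TendstoUniformlyOn F f p K := by
  rw [← tendstoLocallyUniformlyOn_iff_tendstoUniformlyOn_of_compact hK,
    tendstoLocallyUniformlyOn_iff_forall_tendsto]
  intro x hx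
  have hfx : Tendsto (fun q : ι × X ↦ f q.2) (p ×ˢ 𝓝[K] x) (𝓝 (f x)) :=
    (hf x hx).tendsto.comp tendsto_snd
  exact (hfx.prodMk_nhds (hF x hx)).mono_right (nhds_le_uniformity (f x))

theorem log_div_eq_half_log_sq_div_sq (a b : ℝ) :
    Real.log (a / b) = Real.log (a ^ 2 / b ^ 2) / 2 := by
  rw [← div_pow, Real.log_pow]
  push_cast
  ring

theorem log_div_le_sq_sub_sq_div {a b : ℝ} (ha : 0 < a) (hb : 0 < b) :
    Real.log (a / b) ≤ (a ^ 2 - b ^ 2) / (2 * b ^ 2) := by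
  calc Real.log (a / b) = Real.log (a ^ 2 / b ^ 2) / 2 := log_div_eq_half_log_sq_div_sq a b
    _ ≤ (a ^ 2 / b ^ 2 - 1) / 2 := by
      gcongr
      exact Real.log_le_sub_one_of_pos (by positivity)
    _ = (a ^ 2 - b ^ 2) / (2 * b ^ 2) := by field_simp

theorem sq_sub_sq_div_le_log_div {a b : ℝ} (ha : 0 < a) (hb : 0 < b) :
    (a ^ 2 - b ^ 2) / (2 * a ^ 2) ≤ Real.log (a / b) := by
  rw [← neg_le_neg_iff, ← Real.log_inv, inv_div, ← neg_div, neg_sub]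
  exact log_div_le_sq_sub_sq_div hb ha

theorem norm_one_sub_mul_conj_sq_sub_norm_sub_sq (z w : ℂ) :
    ‖1 - z * conj w‖ ^ 2 - ‖z - w‖ ^ 2 = (1 - ‖z‖ ^ 2) * (1 - ‖w‖ ^ 2) := by
  have hre : (conj z * w).re = (z * conj w).re := by
    rw [← conj_re, map_mul, conj_conj]
  simp only [Complex.sq_norm, normSq_sub, normSq_conj, map_one, map_mul, conj_conj, one_mul,
    hre]
  ring

theorem norm_one_sub_mul_conj_of_norm_eq_one (z : ℂ) {w : ℂ} (hw : ‖w‖ = 1) :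
    ‖1 - z * conj w‖ = ‖z - w‖ := by
  have h := norm_one_sub_mul_conj_sq_sub_norm_sub_sq z w
  rw [hw, one_pow, sub_self, mul_zero, sub_eq_zero] at h
  exact (sq_eq_sq₀ (norm_nonneg _) (norm_nonneg _)).mp h

theorem one_sub_mul_conj_ne_zero {z w : ℂ} (hz : ‖z‖ < 1) (hw : ‖w‖ ≤ 1) :
    1 - z * conj w ≠ 0 := by
  have h : ‖z * conj w‖ < 1 := by
    rw [norm_mul, norm_conj]
    exact mul_lt_one_of_nonneg_of_lt_one_left (norm_nonneg z) hz hw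
  rw [sub_ne_zero]
  intro h1
  rw [← h1, norm_one] at h
  exact lt_irrefl 1 h

theorem eventually_norm_lt_one_and_ne {z e : ℂ} (hz : ‖z‖ < 1) (hne : z ≠ e) :
    ∀ᶠ p : ℂ × ℂ in 𝓝 z ×ˢ 𝓝[Metric.ball 0 1] e, ‖p.1‖ < 1 ∧ ‖p.2‖ < 1 ∧ p.1 ≠ p.2 := by
  have hle : 𝓝 z ×ˢ 𝓝[Metric.ball 0 1] e ≤ 𝓝 (z, e) :=
    (prod_mono_right _ nhdsWithin_le_nhds).trans_eq nhds_prod_eq.symm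
  have hfst : ∀ᶠ p : ℂ × ℂ in 𝓝 (z, e), ‖p.1‖ < 1 :=
    continuousAt_fst.norm.eventually_lt_const hz
  have hoff : ∀ᶠ p : ℂ × ℂ in 𝓝 (z, e), p.1 ≠ p.2 :=
    (isOpen_ne_fun continuous_fst continuous_snd).mem_nhds hne
  have hsnd : ∀ᶠ p : ℂ × ℂ in 𝓝 z ×ˢ 𝓝[Metric.ball 0 1] e, p.2 ∈ Metric.ball 0 1 :=
    tendsto_snd.eventually eventually_mem_nhdsWithin
  filter_upwards [hle hfst, hle hoff, hsnd] with p h₁ h₂ h₃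
  exact ⟨h₁, mem_ball_zero_iff.mp h₃, h₂⟩

theorem div_norm_one_sub_mul_conj_sq_le_Kker {z ζ : ℂ} (hz : ‖z‖ < 1) (hζ : ‖ζ‖ < 1)
    (hne : z ≠ ζ) :
    (1 + ‖ζ‖) / 2 * ((1 - ‖z‖ ^ 2) / ‖1 - z * conj ζ‖ ^ 2) ≤ Kker z ζ := by
  have ha : 0 < ‖1 - z * conj ζ‖ := norm_pos_iff.mpr (one_sub_mul_conj_ne_zero hz hζ.le)
  have hb : 0 < ‖z - ζ‖ := norm_sub_pos_iff.mpr hne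
  have hδ : 0 < 1 - ‖ζ‖ := sub_pos.mpr hζ
  have hlog := sq_sub_sq_div_le_log_div ha hb
  rw [norm_one_sub_mul_conj_sq_sub_norm_sub_sq] at hlog
  calc (1 + ‖ζ‖) / 2 * ((1 - ‖z‖ ^ 2) / ‖1 - z * conj ζ‖ ^ 2)
      = 1 / (1 - ‖ζ‖) * ((1 - ‖z‖ ^ 2) * (1 - ‖ζ‖ ^ 2) / (2 * ‖1 - z * conj ζ‖ ^ 2)) := by
        field_simp
        ring
    _ ≤ Kker z ζ := by
        rw [Kker, norm_div]
        gcongr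

theorem Kker_le_div_norm_sub_sq {z ζ : ℂ} (hz : ‖z‖ < 1) (hζ : ‖ζ‖ < 1) (hne : z ≠ ζ) :
    Kker z ζ ≤ (1 + ‖ζ‖) / 2 * ((1 - ‖z‖ ^ 2) / ‖z - ζ‖ ^ 2) := by
  have ha : 0 < ‖1 - z * conj ζ‖ := norm_pos_iff.mpr (one_sub_mul_conj_ne_zero hz hζ.le)
  have hb : 0 < ‖z - ζ‖ := norm_sub_pos_iff.mpr hne
  have hδ : 0 < 1 - ‖ζ‖ := sub_pos.mpr hζ
  have hlog := log_div_le_sq_sub_sq_div ha hb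
  rw [norm_one_sub_mul_conj_sq_sub_norm_sub_sq] at hlog
  calc Kker z ζ
      ≤ 1 / (1 - ‖ζ‖) * ((1 - ‖z‖ ^ 2) * (1 - ‖ζ‖ ^ 2) / (2 * ‖z - ζ‖ ^ 2)) := by
        rw [Kker, norm_div]
        gcongr
    _ = (1 + ‖ζ‖) / 2 * ((1 - ‖z‖ ^ 2) / ‖z - ζ‖ ^ 2) := by
        field_simp
        ring

theorem tendsto_Kker {z e : ℂ} (hz : ‖z‖ < 1) (he : ‖e‖ = 1) :
    Tendsto (fun p : ℂ × ℂ ↦ Kker p.1 p.2) (𝓝 z ×ˢ 𝓝[Metric.ball 0 1] e)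
      (𝓝 ((1 - ‖z‖ ^ 2) / ‖e - z‖ ^ 2)) := by
  have hne : z ≠ e := by
    rintro rfl
    exact hz.ne he
  have hle : 𝓝 z ×ˢ 𝓝[Metric.ball 0 1] e ≤ 𝓝 (z, e) :=
    (prod_mono_right _ nhdsWithin_le_nhds).trans_eq nhds_prod_eq.symm
  have hlower : ContinuousAt (fun p : ℂ × ℂ ↦
      (1 + ‖p.2‖) / 2 * ((1 - ‖p.1‖ ^ 2) / ‖1 - p.1 * conj p.2‖ ^ 2)) (z, e) := by
    have hden := one_sub_mul_conj_ne_zero hz he.le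
    fun_prop (disch := simp [hden])
  have hupper : ContinuousAt (fun p : ℂ × ℂ ↦
      (1 + ‖p.2‖) / 2 * ((1 - ‖p.1‖ ^ 2) / ‖p.1 - p.2‖ ^ 2)) (z, e) := by
    have hden := sub_ne_zero.mpr hne
    fun_prop (disch := simp [hden])
  have hmem := eventually_norm_lt_one_and_ne hz hne
  refine tendsto_of_tendsto_of_tendsto_of_le_of_le'
    (f := fun p : ℂ × ℂ ↦ Kker p.1 p.2) ?_ ?_
    (hmem.mono fun p h ↦ div_norm_one_sub_mul_conj_sq_le_Kker h.1 h.2.1 h.2.2)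
    (hmem.mono fun p h ↦ Kker_le_div_norm_sub_sq h.1 h.2.1 h.2.2)
  · simpa [he, norm_one_sub_mul_conj_of_norm_eq_one z he, norm_sub_rev z e]
      using hlower.tendsto.mono_left hle
  · simpa [he, norm_sub_rev z e] using hupper.tendsto.mono_left hle

theorem tendsto_ofReal_mul_exp_mul_I_nhdsWithin_ball (θ : ℝ) :
    Tendsto (fun q : ℝ × ℝ ↦ (q.1 : ℂ) * exp (q.2 * I)) (𝓝[<] 1 ×ˢ 𝓝 θ)
      (𝓝[Metric.ball 0 1] exp (θ * I)) := by
  refine tendsto_nhdsWithin_iff.mpr ⟨?_, ?_⟩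
  · have h : ContinuousAt (fun q : ℝ × ℝ ↦ (q.1 : ℂ) * exp (q.2 * I)) (1, θ) := by fun_prop
    have hle : 𝓝[<] (1 : ℝ) ×ˢ 𝓝 θ ≤ 𝓝 (1, θ) :=
      (prod_mono_left _ nhdsWithin_le_nhds).trans_eq nhds_prod_eq.symm
    simpa using h.tendsto.mono_left hle
  · have hρ : ∀ᶠ ρ : ℝ in 𝓝[<] 1, ρ ∈ Set.Ioo (-1) 1 := Ioo_mem_nhdsLT (by norm_num)
    filter_upwards [tendsto_fst.eventually hρ] with q hq
    simpa [norm_exp_ofReal_mul_I, abs_lt] using hq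

theorem tendstoUniformlyOn_Kker {S : Set (ℂ × ℝ)} (hS : IsCompact S) (hz : ∀ p ∈ S, ‖p.1‖ < 1) :
    TendstoUniformlyOn (fun (ρ : ℝ) (p : ℂ × ℝ) ↦ Kker p.1 (ρ * exp (p.2 * I)))
      (fun p ↦ (1 - ‖p.1‖ ^ 2) / ‖exp (p.2 * I) - p.1‖ ^ 2) (𝓝[<] 1) S := by
  refine tendstoUniformlyOn_of_isCompact_of_forall_tendsto hS ?_ ?_
  · have hne : ∀ p ∈ S, ‖exp (p.2 * I) - p.1‖ ^ 2 ≠ 0 := by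
      intro p hp h
      have heq : exp (p.2 * I) = p.1 := by simpa [sub_eq_zero] using h
      exact (hz p hp).ne (heq ▸ norm_exp_ofReal_mul_I p.2)
    fun_prop (disch := assumption)
  · rintro ⟨z, θ⟩ hp
    have hζ : Tendsto (fun q : ℝ × ℂ × ℝ ↦ (q.1 : ℂ) * exp (q.2.2 * I))
        (𝓝[<] 1 ×ˢ 𝓝 (z, θ)) (𝓝[Metric.ball 0 1] exp (θ * I)) :=
      (tendsto_ofReal_mul_exp_mul_I_nhdsWithin_ball θ).comp
        (tendsto_fst.prodMk (continuousAt_snd.tendsto.comp tendsto_snd))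
    have hfst : Tendsto (fun q : ℝ × ℂ × ℝ ↦ q.2.1) (𝓝[<] 1 ×ˢ 𝓝 (z, θ)) (𝓝 z) :=
      continuousAt_fst.tendsto.comp tendsto_snd
    exact ((tendsto_Kker (hz _ hp) (norm_exp_ofReal_mul_I θ)).comp (hfst.prodMk hζ)).mono_left
      (prod_mono_right _ nhdsWithin_le_nhds)

/-- For a compact subset `D` of the open unit disc,
`K(z, ρ·e^{iθ}) → (1-|z|²)/|e^{iθ}-z|²` as `ρ ↑ 1`, uniformly in `z ∈ D`
and `θ ∈ [0, 2π]`. -/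
theorem stmt9 (D : Set ℂ) (hD : IsCompact D) (hDsub : D ⊆ Metric.ball (0 : ℂ) 1) :
    ∀ ε > 0, ∃ ρ₀ : ℝ, ρ₀ < 1 ∧ ∀ ρ : ℝ, ρ₀ < ρ → ρ < 1 →
      ∀ z ∈ D, ∀ θ ∈ Set.Icc (0 : ℝ) (2 * Real.pi),
        |Kker z ((ρ : ℂ) * Complex.exp (θ * Complex.I)) -
          (1 - ‖z‖ ^ 2) / ‖Complex.exp (θ * Complex.I) - z‖ ^ 2| < ε := by
  intro ε hε
  have hunif := tendstoUniformlyOn_Kker (hD.prod (isCompact_Icc (a := 0) (b := 2 * Real.pi)))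
    fun p hp ↦ mem_ball_zero_iff.mp (hDsub hp.1)
  obtain ⟨ρ₀, hρ₀, hsub⟩ :=
    mem_nhdsLT_iff_exists_Ioo_subset.mp (Metric.tendstoUniformlyOn_iff.mp hunif ε hε)
  refine ⟨ρ₀, hρ₀, fun ρ hlt hρ z hz θ hθ ↦ ?_⟩
  rw [← Real.dist_eq, dist_comm]
  exact hsub ⟨hlt, hρ⟩ (z, θ) ⟨hz, hθ⟩
end

section
/- Let s be a nonnegative integer and let D be a compact subset of the open unit disc 𝔻. Then, uniformly in z ∈ D and θ ∈ [0,2π], K_s(z, ρe^{iθ}) → (2^{s+1}/(s+1))·Re(1/(1−z e^{−iθ})^{s+1}) as ρ ↑ 1; that is, sup_{z∈D, θ∈[0,2π]} |K_s(z, ρe^{iθ}) − (2^{s+1}/(s+1))·Re((1−z e^{−iθ})^{−(s+1)})| → 0 as ρ → 1⁻. -/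
open Complex

/-- The Weierstrass primary factor `E(w,s) = (1-w)·exp(w + w²/2 + ⋯ + w^s/s)`. -/
noncomputable def weierE (w : ℂ) (s : ℕ) : ℂ :=
  (1 - w) * Complex.exp (∑ j ∈ Finset.range s, w ^ (j + 1) / (j + 1))

/-- `A(z,ζ) = (1-|ζ|²)/(1 - z·conj ζ)`. -/
noncomputable def Acayley (z ζ : ℂ) : ℂ :=
  ((1 : ℂ) - (‖ζ‖ : ℂ) ^ 2) / (1 - z * (starRingEnd ℂ) ζ)

/-- The kernel `K_s(z,ζ) = -log|E(A(z,ζ),s)| / (1-|ζ|)^{s+1}`. -/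
noncomputable def Ks (s : ℕ) (z ζ : ℂ) : ℝ :=
  -Real.log ‖weierE (Acayley z ζ) s‖ / (1 - ‖ζ‖) ^ (s + 1)

/-- The pseudohyperbolic disc `D*(z,σ) = {ζ : |(z-ζ)/(1-z·conj ζ)| < σ}`. -/
noncomputable def pseudoDisc (z : ℂ) (σ : ℝ) : Set ℂ :=
  {ζ : ℂ | ‖(z - ζ) / (1 - z * (starRingEnd ℂ) ζ)‖ < σ}

open Filter Metric Topology Asymptotics ComplexConjugate

/-! As `w → 0`, the Taylor expansion of `log (1 - w)` gives
`-log |E(w, s)| = Re w ^ (s + 1) / (s + 1) + o(w ^ (s + 1))`. Since `A(z, ζ) = (1 - |ζ|) Q(z, ζ)`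
with `Q(z, ζ) = (1 + |ζ|) / (1 - z conj ζ)`, the kernel `K_s(z, ζ)` equals
`Re Q(z, ζ) ^ (s + 1) / (s + 1) + o(1)`, and `Q` extends continuously to the boundary, with value
`2 / (1 - z conj u)` at `|u| = 1`. This is a joint limit in `(z, ζ)`, so compactness makes it
uniform in `(z, u)`. -/

theorem tendstoUniformlyOn_of_forall_tendsto_prod {ι α β : Type*} [TopologicalSpace α]
    [UniformSpace β] {F : ι → α → β} {f : α → β} {l : Filter ι} {K : Set α} (hK : IsCompact K)
    (hf : ContinuousOn f K)
    (h : ∀ x ∈ K, Tendsto (fun y : ι × α ↦ F y.1 y.2) (l ×ˢ 𝓝[K] x) (𝓝 (f x))) :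
    TendstoUniformlyOn F f l K := by
  rw [← tendstoLocallyUniformlyOn_iff_tendstoUniformlyOn_of_compact hK,
    tendstoLocallyUniformlyOn_iff_forall_tendsto]
  exact fun x hx ↦ (((hf x hx).tendsto.comp tendsto_snd).prodMk_nhds (h x hx)).mono_right
    (nhds_le_uniformity (f x))

theorem logTaylor_neg (n : ℕ) (w : ℂ) :
    logTaylor (n + 1) (-w) = -∑ j ∈ Finset.range n, w ^ (j + 1) / (j + 1) := by
  induction n with
  | zero => simp [logTaylor_succ, logTaylor_zero]
  | succ n ih =>
    have hsign : (-1 : ℂ) ^ (n + 1 + 1) * (-w) ^ (n + 1) = -w ^ (n + 1) := by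
      rw [pow_succ, mul_right_comm, ← mul_pow]
      ring
    rw [logTaylor_succ, Pi.add_apply, ih, Finset.sum_range_succ, hsign]
    push_cast
    ring

theorem log_norm_weierE {w : ℂ} (hw : w ≠ 1) (s : ℕ) :
    Real.log ‖weierE w s‖ = (log (1 - w) - logTaylor (s + 1) (-w)).re := by
  have hw' : ‖1 - w‖ ≠ 0 := norm_ne_zero_iff.mpr (sub_ne_zero.mpr hw.symm)
  rw [weierE, norm_mul, Real.log_mul hw' (norm_ne_zero_iff.mpr (exp_ne_zero _)), norm_exp,
    Real.log_exp, logTaylor_neg, sub_neg_eq_add, add_re, log_re]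

theorem neg_log_norm_weierE_sub_re_pow_div {w : ℂ} (hw : w ≠ 1) (s : ℕ) :
    -Real.log ‖weierE w s‖ - (w ^ (s + 1)).re / (s + 1) =
      -(log (1 - w) - logTaylor (s + 2) (-w)).re := by
  have hre : (w ^ (s + 1)).re / (s + 1) = (w ^ (s + 1) / (s + 1)).re := by
    rw [← div_ofReal_re]
    push_cast
    rfl
  rw [log_norm_weierE hw, hre, logTaylor_neg, logTaylor_neg, Finset.sum_range_succ]
  simp only [sub_re, neg_re, add_re]
  ring

theorem neg_log_norm_weierE_sub_isLittleO (s : ℕ) :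
    (fun w : ℂ ↦ -Real.log ‖weierE w s‖ - (w ^ (s + 1)).re / (s + 1)) =o[𝓝 0]
      fun w ↦ w ^ (s + 1) := by
  have hneg : Tendsto (fun w : ℂ ↦ -w) (𝓝 0) (𝓝 0) := by
    simpa only [neg_zero] using (continuous_neg (G := ℂ)).tendsto 0
  have htaylor : (fun w : ℂ ↦ log (1 - w) - logTaylor (s + 2) (-w)) =O[𝓝 0]
      fun w ↦ w ^ (s + 2) := by
    have hcomp := ((log_sub_logTaylor_isBigO (s + 1)).comp_tendsto hneg).norm_right
    simp only [Function.comp_def, ← sub_eq_add_neg, norm_pow, norm_neg] at hcomp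
    simpa only [← norm_pow, isBigO_norm_right] using hcomp
  have hre : (fun w : ℂ ↦ -Real.log ‖weierE w s‖ - (w ^ (s + 1)).re / (s + 1)) =O[𝓝 0]
      fun w ↦ log (1 - w) - logTaylor (s + 2) (-w) := by
    refine .of_bound' ?_
    filter_upwards [eventually_ne_nhds zero_ne_one] with w hw
    rw [neg_log_norm_weierE_sub_re_pow_div hw, norm_neg]
    exact abs_re_le_norm _
  exact (hre.trans htaylor).trans_isLittleO (isLittleO_pow_pow (Nat.lt_succ_self _))

/-- The quotient `Q(z, ζ) = A(z, ζ) / (1 - |ζ|)`, written so that it makes sense for `|ζ| = 1`. -/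
noncomputable def cayleyQuot (z ζ : ℂ) : ℂ :=
  (1 + ‖ζ‖) / (1 - z * conj ζ)

/-- The function of `z` and `u` to which `K_s(z, ζ)` tends as `ζ` approaches a point `u` of the unit
circle. -/
noncomputable def boundaryKs (s : ℕ) (z u : ℂ) : ℝ :=
  2 ^ (s + 1) / (s + 1 : ℝ) * (1 / (1 - z * conj u) ^ (s + 1)).re

theorem Acayley_eq_mul_cayleyQuot (z ζ : ℂ) :
    Acayley z ζ = (1 - ‖ζ‖ : ℝ) * cayleyQuot z ζ := by
  rw [Acayley, cayleyQuot]
  push_cast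
  ring

theorem re_Acayley_pow (n : ℕ) (z ζ : ℂ) :
    (Acayley z ζ ^ n).re = (1 - ‖ζ‖) ^ n * (cayleyQuot z ζ ^ n).re := by
  rw [Acayley_eq_mul_cayleyQuot, mul_pow, ← ofReal_pow, re_ofReal_mul]

theorem boundaryKs_eq_re_cayleyQuot_pow_div (s : ℕ) (z : ℂ) {u : ℂ} (hu : ‖u‖ = 1) :
    boundaryKs s z u = (cayleyQuot z u ^ (s + 1)).re / (s + 1) := by
  have hquot : cayleyQuot z u ^ (s + 1) =
      (2 ^ (s + 1) : ℝ) * (1 / (1 - z * conj u) ^ (s + 1)) := by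
    rw [cayleyQuot, hu, div_pow]
    push_cast
    ring
  rw [boundaryKs, hquot, re_ofReal_mul]
  ring

theorem Ks_sub_re_cayleyQuot_pow_div (s : ℕ) (z : ℂ) {ζ : ℂ} (hζ : ‖ζ‖ ≠ 1) :
    Ks s z ζ - (cayleyQuot z ζ ^ (s + 1)).re / (s + 1) =
      (-Real.log ‖weierE (Acayley z ζ) s‖ - (Acayley z ζ ^ (s + 1)).re / (s + 1)) /
        (1 - ‖ζ‖) ^ (s + 1) := by
  have hζ' : 1 - ‖ζ‖ ≠ 0 := sub_ne_zero.mpr hζ.symm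
  rw [Ks, re_Acayley_pow]
  rw [sub_div, mul_div_assoc, mul_div_cancel_left₀ _ (pow_ne_zero _ hζ')]

section Boundary

variable {z u : ℂ}

theorem continuousAt_cayleyQuot (hzu : z * conj u ≠ 1) :
    ContinuousAt (fun p : ℂ × ℂ ↦ cayleyQuot p.1 p.2) (z, u) := by
  have hden : 1 - z * conj u ≠ 0 := sub_ne_zero.mpr hzu.symm
  unfold cayleyQuot
  fun_prop (disch := exact hden)

theorem Acayley_isBigO (hzu : z * conj u ≠ 1) :
    (fun p : ℂ × ℂ ↦ Acayley p.1 p.2) =O[𝓝 (z, u)] fun p ↦ 1 - ‖p.2‖ := by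
  have hdist : (fun p : ℂ × ℂ ↦ ((1 - ‖p.2‖ : ℝ) : ℂ)) =O[𝓝 (z, u)] fun p ↦ 1 - ‖p.2‖ :=
    .of_bound' <| .of_forall fun p ↦ (norm_real _).le
  simpa only [Acayley_eq_mul_cayleyQuot, mul_one] using
    hdist.mul ((continuousAt_cayleyQuot hzu).tendsto.isBigO_one ℝ)

theorem tendsto_Acayley (hu : ‖u‖ = 1) (hzu : z * conj u ≠ 1) :
    Tendsto (fun p : ℂ × ℂ ↦ Acayley p.1 p.2) (𝓝 (z, u)) (𝓝 0) := by
  refine (Acayley_isBigO hzu).trans_tendsto ?_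
  have hcont : Continuous fun p : ℂ × ℂ ↦ 1 - ‖p.2‖ := by fun_prop
  simpa only [hu, sub_self] using hcont.tendsto (z, u)

theorem tendsto_re_cayleyQuot_pow_div (s : ℕ) (hu : ‖u‖ = 1) (hzu : z * conj u ≠ 1) :
    Tendsto (fun p : ℂ × ℂ ↦ (cayleyQuot p.1 p.2 ^ (s + 1)).re / (s + 1)) (𝓝 (z, u))
      (𝓝 (boundaryKs s z u)) := by
  rw [boundaryKs_eq_re_cayleyQuot_pow_div s z hu]
  exact ((continuous_re.tendsto _).comp ((continuousAt_cayleyQuot hzu).tendsto.pow _)).div_const _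

theorem tendsto_Ks (s : ℕ) (hu : ‖u‖ = 1) (hzu : z * conj u ≠ 1) :
    Tendsto (fun p : ℂ × ℂ ↦ Ks s p.1 p.2) (𝓝[{p | ‖p.2‖ < 1}] (z, u))
      (𝓝 (boundaryKs s z u)) := by
  have hlittle : (fun p : ℂ × ℂ ↦
      -Real.log ‖weierE (Acayley p.1 p.2) s‖ - (Acayley p.1 p.2 ^ (s + 1)).re / (s + 1))
        =o[𝓝 (z, u)] fun p ↦ (1 - ‖p.2‖) ^ (s + 1) :=
    ((neg_log_norm_weierE_sub_isLittleO s).comp_tendsto (tendsto_Acayley hu hzu)).trans_isBigO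
      ((Acayley_isBigO hzu).pow _)
  have hlimit := hlittle.tendsto_div_nhds_zero.add (tendsto_re_cayleyQuot_pow_div s hu hzu)
  rw [zero_add] at hlimit
  refine (hlimit.mono_left nhdsWithin_le_nhds).congr' ?_
  filter_upwards [self_mem_nhdsWithin] with p hp
  rw [← Ks_sub_re_cayleyQuot_pow_div s p.1 (ne_of_lt hp), sub_add_cancel]

theorem continuousAt_boundaryKs (s : ℕ) (hzu : z * conj u ≠ 1) :
    ContinuousAt (fun p : ℂ × ℂ ↦ boundaryKs s p.1 p.2) (z, u) := by
  have hden : (1 - z * conj u) ^ (s + 1) ≠ 0 := pow_ne_zero _ (sub_ne_zero.mpr hzu.symm)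
  unfold boundaryKs
  fun_prop (disch := exact hden)

end Boundary

theorem tendsto_ofReal_mul_nhdsWithin_norm_lt_one {K : Set (ℂ × ℂ)} (hK : ∀ p ∈ K, ‖p.2‖ = 1)
    (q : ℂ × ℂ) :
    Tendsto (fun y : ℝ × ℂ × ℂ ↦ (y.2.1, (y.1 : ℂ) * y.2.2)) (𝓝[<] 1 ×ˢ 𝓝[K] q)
      (𝓝[{p | ‖p.2‖ < 1}] q) := by
  refine tendsto_nhdsWithin_iff.mpr ⟨?_, ?_⟩
  · have hcont : Continuous fun y : ℝ × ℂ × ℂ ↦ (y.2.1, (y.1 : ℂ) * y.2.2) := by fun_prop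
    have hlimit := hcont.tendsto (1, q)
    rw [nhds_prod_eq, ofReal_one, one_mul] at hlimit
    exact hlimit.mono_left (prod_mono nhdsWithin_le_nhds nhdsWithin_le_nhds)
  · have hρ : ∀ᶠ ρ : ℝ in 𝓝[<] 1, ρ ∈ Set.Ioo 0 1 := Ioo_mem_nhdsLT zero_lt_one
    filter_upwards [hρ.prod_mk (eventually_mem_nhdsWithin (a := q) (s := K))] with y hy
    rw [norm_mul, hK y.2 hy.2, mul_one, norm_real,
      Real.norm_of_nonneg hy.1.1.le]
    exact hy.1.2

theorem tendstoUniformlyOn_Ks (s : ℕ) {K : Set (ℂ × ℂ)} (hK : IsCompact K)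
    (hnorm : ∀ p ∈ K, ‖p.2‖ = 1) (hne : ∀ p ∈ K, p.1 * conj p.2 ≠ 1) :
    TendstoUniformlyOn (fun (ρ : ℝ) (p : ℂ × ℂ) ↦ Ks s p.1 (ρ * p.2))
      (fun p ↦ boundaryKs s p.1 p.2) (𝓝[<] 1) K := by
  refine tendstoUniformlyOn_of_forall_tendsto_prod hK
    (fun p hp ↦ (continuousAt_boundaryKs s (hne p hp)).continuousWithinAt) fun p hp ↦ ?_
  simpa only [Function.comp_def] using (tendsto_Ks s (hnorm p hp) (hne p hp)).comp
    (tendsto_ofReal_mul_nhdsWithin_norm_lt_one hnorm p)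

theorem stmt13_general (s : ℕ) (D : Set ℂ) (hD : IsCompact D) (hDsub : D ⊆ (sphere (0 : ℂ) 1)ᶜ) :
    ∀ ε > 0, ∃ ρ₀ : ℝ, ρ₀ < 1 ∧ ∀ ρ : ℝ, ρ₀ < ρ → ρ < 1 → ∀ z ∈ D, ∀ θ : ℝ,
      |Ks s z ((ρ : ℂ) * Complex.exp (θ * Complex.I)) -
        (2 ^ (s + 1) / (s + 1 : ℝ)) *
          (1 / (1 - z * Complex.exp (-θ * Complex.I)) ^ (s + 1)).re| < ε := by
  intro ε hε
  have hnorm : ∀ p ∈ D ×ˢ sphere (0 : ℂ) 1, ‖p.2‖ = 1 := fun p hp ↦ mem_sphere_zero_iff_norm.mp hp.2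
  have hne : ∀ p ∈ D ×ˢ sphere (0 : ℂ) 1, p.1 * conj p.2 ≠ 1 := fun p hp h ↦ hDsub hp.1 <| by
    simpa [hnorm p hp] using congrArg norm h
  have hunif := tendstoUniformlyOn_Ks s (hD.prod (isCompact_sphere 0 1)) hnorm hne
  obtain ⟨ρ₀, hρ₀, hclose⟩ :=
    mem_nhdsLT_iff_exists_Ioo_subset.mp (Metric.tendstoUniformlyOn_iff.mp hunif ε hε)
  refine ⟨ρ₀, hρ₀, fun ρ hlt hlt_one z hz θ ↦ ?_⟩
  have hconj : conj (exp (θ * I)) = exp (-θ * I) := by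
    rw [← exp_conj, map_mul, conj_ofReal, conj_I, mul_neg, neg_mul]
  have hdist := hclose ⟨hlt, hlt_one⟩ (z, exp (θ * I)) ⟨hz, by simp⟩
  rwa [dist_comm, Real.dist_eq, boundaryKs, hconj] at hdist

/-- For a compact subset `D` of the open unit disc,
`K_s(z, ρ·e^{iθ}) → (2^{s+1}/(s+1))·Re(1/(1-z·e^{-iθ})^{s+1})` as `ρ ↑ 1`,
uniformly in `z ∈ D` and `θ ∈ [0, 2π]`. -/
theorem stmt13 (s : ℕ) (D : Set ℂ) (hD : IsCompact D) (hDsub : D ⊆ Metric.ball (0 : ℂ) 1) :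
    ∀ ε > 0, ∃ ρ₀ : ℝ, ρ₀ < 1 ∧ ∀ ρ : ℝ, ρ₀ < ρ → ρ < 1 →
      ∀ z ∈ D, ∀ θ ∈ Set.Icc (0 : ℝ) (2 * Real.pi),
        |Ks s z ((ρ : ℂ) * Complex.exp (θ * Complex.I)) -
          (2 ^ (s + 1) / (s + 1 : ℝ)) *
            (1 / (1 - z * Complex.exp (-θ * Complex.I)) ^ (s + 1)).re| < ε := by
  intro ε hε
  obtain ⟨ρ₀, hρ₀, hclose⟩ := stmt13_general s D hD
    (fun z hz hz' ↦ (mem_ball.mp (hDsub hz)).ne (mem_sphere.mp hz')) ε hε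
  exact ⟨ρ₀, hρ₀, fun ρ hlt hlt_one z hz θ _ ↦ hclose ρ hlt hlt_one z hz θ⟩
end
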